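/- arXiv:2409.10703 — 3 statements merged into one kernel-verified Lean document; each statement's English description precedes it below -/
import Mathlib

section
/- Let U₀ be a real m×N matrix and X₀ a real n×N matrix such that the stacked (m+n)×N matrix D₀ = [U₀; X₀] has rank m+n. Then for every real m×n matrix K there exists a real N×n matrix G with U₀G = K and X₀G = I_n. Moreover, for any such G and any real matrices A (n×n), B (n×m), Ω₀ (n×N), setting X₁ = A X₀ + B U₀ + Ω₀, one has A + BK = (X₁ − Ω₀)·G. -/
open Matrix

section Solvability

variable {F R ι κ μ ν τ : Type*} [Fintype τ]

theorem mulVec_surjective_iff_rank_eq_card [Field F] [Fintype ι] {D : Matrix ι τ F} :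
    Function.Surjective D.mulVec ↔ D.rank = Fintype.card ι := by
  rw [← coe_mulVecLin, ← LinearMap.range_eq_top, rank, ← Module.finrank_fintype_fun_eq_card F]
  exact ⟨fun h => by rw [h, finrank_top], Submodule.eq_top_of_finrank_eq⟩

theorem exists_mul_eq_of_mulVec_surjective [NonUnitalNonAssocSemiring R] {D : Matrix ι τ R}
    (hD : Function.Surjective D.mulVec) (C : Matrix ι κ R) : ∃ G : Matrix τ κ R, D * G = C := by
  choose g hg using fun j => hD (C.col j)
  exact ⟨of fun t j => g j t, ext fun i j => congrFun (hg j) i⟩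

theorem exists_mul_eq_and_mul_eq_of_rank_fromRows [Field F] [Fintype μ] [Fintype ν]
    {U : Matrix μ τ F} {X : Matrix ν τ F}
    (hrank : (fromRows U X).rank = Fintype.card μ + Fintype.card ν)
    (K : Matrix μ κ F) (L : Matrix ν κ F) : ∃ G : Matrix τ κ F, U * G = K ∧ X * G = L := by
  have hsurj : Function.Surjective (fromRows U X).mulVec :=
    mulVec_surjective_iff_rank_eq_card.mpr (hrank.trans Fintype.card_sum.symm)
  obtain ⟨G, hG⟩ := exists_mul_eq_of_mulVec_surjective hsurj (fromRows K L)
  rw [fromRows_mul] at hG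
  exact ⟨G, fromRows_inj hG⟩

end Solvability

section DataDriven

variable {F R μ ν π τ : Type*} [Fintype μ] [Fintype ν] [DecidableEq ν] [Fintype τ]

theorem add_mul_gain_eq_sub_noise_mul [Ring R] {U₀ : Matrix μ τ R} {X₀ : Matrix ν τ R}
    {K : Matrix μ ν R} {G : Matrix τ ν R} (hU : U₀ * G = K) (hX : X₀ * G = 1)
    {A : Matrix π ν R} {B : Matrix π μ R} {Ω₀ X₁ : Matrix π τ R}
    (hX₁ : X₁ = A * X₀ + B * U₀ + Ω₀) : A + B * K = (X₁ - Ω₀) * G :=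
  calc
    A + B * K = A * (X₀ * G) + B * (U₀ * G) := by rw [hX, hU, Matrix.mul_one]
    _ = (A * X₀ + B * U₀) * G := by rw [Matrix.add_mul, Matrix.mul_assoc, Matrix.mul_assoc]
    _ = (X₁ - Ω₀) * G := by rw [hX₁, add_sub_cancel_right]

theorem stmt10_general [Field F] (U₀ : Matrix μ τ F) (X₀ : Matrix ν τ F)
    (hrank : (fromRows U₀ X₀).rank = Fintype.card μ + Fintype.card ν) :
    (∀ K : Matrix μ ν F, ∃ G : Matrix τ ν F, U₀ * G = K ∧ X₀ * G = 1) ∧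
    ∀ (K : Matrix μ ν F) (G : Matrix τ ν F), U₀ * G = K → X₀ * G = 1 →
      ∀ (A : Matrix π ν F) (B : Matrix π μ F) (Ω₀ X₁ : Matrix π τ F),
        X₁ = A * X₀ + B * U₀ + Ω₀ → A + B * K = (X₁ - Ω₀) * G :=
  ⟨fun K => exists_mul_eq_and_mul_eq_of_rank_fromRows hrank K 1,
    fun _ _ hU hX _ _ _ _ hX₁ => add_mul_gain_eq_sub_noise_mul hU hX hX₁⟩

end DataDriven

/-- Let `U₀` be a real `m × N` matrix and `X₀` a real `n × N` matrix
such that the stacked `(m+n) × N` matrix `D₀ = [U₀; X₀]` has rank `m + n`.  Then for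
every real `m × n` matrix `K` there exists a real `N × n` matrix `G` with `U₀ G = K`
and `X₀ G = Iₙ`.  Moreover, for any such `G` and any real matrices `A` (`n × n`),
`B` (`n × m`), `Ω₀` (`n × N`), setting `X₁ = A X₀ + B U₀ + Ω₀`, one has
`A + B K = (X₁ - Ω₀) G`. -/
theorem stmt10 {m n N : ℕ} (U₀ : Matrix (Fin m) (Fin N) ℝ) (X₀ : Matrix (Fin n) (Fin N) ℝ)
    (hrank : (Matrix.fromRows U₀ X₀).rank = m + n) :
    (∀ K : Matrix (Fin m) (Fin n) ℝ, ∃ G : Matrix (Fin N) (Fin n) ℝ,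
        U₀ * G = K ∧ X₀ * G = 1) ∧
    ∀ (K : Matrix (Fin m) (Fin n) ℝ) (G : Matrix (Fin N) (Fin n) ℝ),
      U₀ * G = K → X₀ * G = 1 →
      ∀ (A : Matrix (Fin n) (Fin n) ℝ) (B : Matrix (Fin n) (Fin m) ℝ)
        (Ω₀ X₁ : Matrix (Fin n) (Fin N) ℝ),
        X₁ = A * X₀ + B * U₀ + Ω₀ →
        A + B * K = (X₁ - Ω₀) * G :=
  stmt10_general U₀ X₀ (by simpa only [Fintype.card_fin] using hrank)
end

section
/- Let P and Q be symmetric positive definite real n×n matrices, R a symmetric positive definite real m×m matrix, γ ∈ (0,1), c ≥ 0, G a real N×n matrix, U₀ a real m×N matrix, and X₁ a real n×N matrix. Suppose P − γ·(X₁G)ᵀP(X₁G) − Q − (U₀G)ᵀR(U₀G) − γ·c·GᵀG ⪰ 0 and (1−γ)·λmax((X₁G)ᵀP(X₁G) + c·GᵀG) ≤ λmin(Q + (U₀G)ᵀR(U₀G)). Then (X₁G)ᵀP(X₁G) + c·GᵀG ⪯ P. -/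
open Matrix

/-!
With `M = (X₁G)ᵀP(X₁G) + c GᵀG` and `S = Q + (U₀G)ᵀR(U₀G)`, feasibility reads `γM + S ⪯ P`.
The eigenvalue gap puts a scalar matrix between `(1 - γ)M` and `S`, so
`M = γM + (1 - γ)M ⪯ γM + S ⪯ P`.
-/

section LoewnerOrder

open scoped MatrixOrder

variable {n 𝕜 : Type*} [Fintype n] [DecidableEq n] [RCLike 𝕜] {A B : Matrix n n 𝕜}

lemma le_smul_one_iff_eigenvalues_le (hA : A.IsHermitian) {a : ℝ} :
    A ≤ a • (1 : Matrix n n 𝕜) ↔ ∀ i, hA.eigenvalues i ≤ a := by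
  rw [← Algebra.algebraMap_eq_smul_one, le_algebraMap_iff_spectrum_le hA.isSelfAdjoint,
    hA.spectrum_real_eq_range_eigenvalues, Set.forall_mem_range]

lemma smul_one_le_iff_le_eigenvalues (hA : A.IsHermitian) {a : ℝ} :
    a • (1 : Matrix n n 𝕜) ≤ A ↔ ∀ i, a ≤ hA.eigenvalues i := by
  rw [← Algebra.algebraMap_eq_smul_one, algebraMap_le_iff_le_spectrum hA.isSelfAdjoint,
    hA.spectrum_real_eq_range_eigenvalues, Set.forall_mem_range]

lemma smul_le_of_eigenvalues_le_of_le_eigenvalues (hA : A.IsHermitian) (hB : B.IsHermitian)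
    {t a b : ℝ} (ht : 0 ≤ t) (ha : ∀ i, hA.eigenvalues i ≤ a) (hb : ∀ i, b ≤ hB.eigenvalues i)
    (hab : t * a ≤ b) : t • A ≤ B :=
  calc
    t • A ≤ t • a • (1 : Matrix n n 𝕜) :=
      smul_le_smul_of_nonneg_left ((le_smul_one_iff_eigenvalues_le hA).2 ha) ht
    _ = (t * a) • (1 : Matrix n n 𝕜) := smul_smul t a 1
    _ ≤ B := (smul_one_le_iff_le_eigenvalues hB).2 fun i => hab.trans (hb i)

theorem stmt14_general {P M S : Matrix n n 𝕜} (hM : M.IsHermitian) (hS : S.IsHermitian)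
    {γ a b : ℝ} (hγ : γ ≤ 1) (hfeas : γ • M + S ≤ P) (ha : ∀ i, hM.eigenvalues i ≤ a)
    (hb : ∀ i, b ≤ hS.eigenvalues i) (hgap : (1 - γ) * a ≤ b) : M ≤ P :=
  calc
    M = γ • M + (1 - γ) • M := by module
    _ ≤ γ • M + S := by
      gcongr
      exact smul_le_of_eigenvalues_le_of_le_eigenvalues hM hS (sub_nonneg.2 hγ) ha hb hgap
    _ ≤ P := hfeas

end LoewnerOrder

/-- Let `P` and `Q` be symmetric positive definite real `n × n`
matrices, `R` a symmetric positive definite real `m × m` matrix, `γ ∈ (0,1)`,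
`c ≥ 0`, `G` a real `N × n` matrix, `U₀` a real `m × N` matrix, and `X₁` a real
`n × N` matrix.  Suppose
`P - γ (X₁G)ᵀ P (X₁G) - Q - (U₀G)ᵀ R (U₀G) - γ c GᵀG ⪰ 0` and
`(1 - γ) λmax((X₁G)ᵀP(X₁G) + c GᵀG) ≤ λmin(Q + (U₀G)ᵀR(U₀G))`.
Then `(X₁G)ᵀP(X₁G) + c GᵀG ⪯ P`. -/
theorem stmt14 {n m N : ℕ} [NeZero n] (P Q : Matrix (Fin n) (Fin n) ℝ)
    (hP : P.PosDef) (hQ : Q.PosDef)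
    (R : Matrix (Fin m) (Fin m) ℝ) (hR : R.PosDef)
    (γ : ℝ) (hγ : γ ∈ Set.Ioo (0 : ℝ) 1) (c : ℝ) (hc : 0 ≤ c)
    (G : Matrix (Fin N) (Fin n) ℝ) (U₀ : Matrix (Fin m) (Fin N) ℝ)
    (X₁ : Matrix (Fin n) (Fin N) ℝ)
    (hfeas : Matrix.PosSemidef
      (P - γ • ((X₁ * G)ᵀ * P * (X₁ * G)) - Q - (U₀ * G)ᵀ * R * (U₀ * G) -
        (γ * c) • (Gᵀ * G)))
    (h1 : ((X₁ * G)ᵀ * P * (X₁ * G) + c • (Gᵀ * G)).IsHermitian)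
    (h2 : (Q + (U₀ * G)ᵀ * R * (U₀ * G)).IsHermitian)
    (hgap : (1 - γ) * (⨆ i, h1.eigenvalues i) ≤ ⨅ i, h2.eigenvalues i) :
    Matrix.PosSemidef (P - ((X₁ * G)ᵀ * P * (X₁ * G) + c • (Gᵀ * G))) :=
  stmt14_general h1 h2 hγ.2.le (le_iff.2 <| by
      simpa only [smul_add, smul_smul, sub_sub, add_assoc, add_left_comm, add_comm] using hfeas)
    (le_ciSup (Set.finite_range _).bddAbove) (ciInf_le (Set.finite_range _).bddBelow) hgap
end

section
/- Let Q (n×n) and R (m×m) be symmetric positive definite real matrices, A a real n×n matrix, B a real n×m matrix, γ ∈ (0,1), and P* a symmetric positive semidefinite real n×n matrix satisfying the discounted algebraic Riccati equation P* = Q + γ·AᵀP*A − γ²·AᵀP*B(R+γBᵀP*B)^{-1}BᵀP*A. Let μ be a probability measure on ℝⁿ with zero mean (∫ w dμ(w) = 0 componentwise) and second-moment matrix W (∫ w wᵀ dμ(w) = W entrywise), set K* = −γ·(R+γBᵀP*B)^{-1}BᵀP*A and c* = (γ/(1−γ))·Tr(P*W). Then for every x ∈ ℝⁿ and every u ∈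 ℝᵐ: xᵀP*x + c* ≤ xᵀQx + uᵀRu + γ·( ∫ (Ax+Bu+w)ᵀP*(Ax+Bu+w) dμ(w) + c* ), with equality when u = K*x. -/
open Matrix MeasureTheory

/-!
Integrating out the centred noise gives `E[(z + w)ᵀP(z + w)] = zᵀPz + Tr(PW)`, and `c*` is the fixed
point of `c ↦ γ (Tr(PW) + c)`, so the constants cancel and only the noiseless Bellman equation
remains. Its right-hand side is a quadratic form in `(x, u)`, and the Riccati equation says that `P`
is the Schur complement of the input block `S = R + γBᵀPB` in the matrix of that form. Completing
the square therefore leaves `xᵀPx + (u - Kx)ᵀS(u - Kx)`, which is minimal at `u = Kx`.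
-/

section Noise

variable {ι κ Ω : Type*} [Fintype ι] [Fintype κ] [MeasurableSpace Ω] {μ : Measure Ω}

lemma integrable_const_dotProduct {X : Ω → ι → ℝ} (hX : ∀ i, Integrable (fun ω ↦ X ω i) μ)
    (v : ι → ℝ) : Integrable (fun ω ↦ v ⬝ᵥ X ω) μ :=
  integrable_finsetSum _ fun i _ ↦ (hX i).const_mul (v i)

lemma integral_const_dotProduct {X : Ω → ι → ℝ} (hX : ∀ i, Integrable (fun ω ↦ X ω i) μ)
    (v : ι → ℝ) : ∫ ω, v ⬝ᵥ X ω ∂μ = v ⬝ᵥ fun i ↦ ∫ ω, X ω i ∂μ := by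
  simp only [dotProduct]
  rw [integral_finsetSum _ fun i _ ↦ (hX i).const_mul (v i)]
  simp only [integral_const_mul]

lemma dotProduct_mulVec_eq_sum {𝕜 : Type*} [CommSemiring 𝕜] (P : Matrix ι κ 𝕜)
    (x : ι → 𝕜) (y : κ → 𝕜) :
    x ⬝ᵥ P *ᵥ y = ∑ i, ∑ j, P i j * (y j * x i) := by
  simp only [dotProduct, mulVec, Finset.mul_sum]
  exact Finset.sum_congr rfl fun i _ ↦ Finset.sum_congr rfl fun j _ ↦ by ring

lemma integrable_dotProduct_mulVec {X : Ω → ι → ℝ} {Y : Ω → κ → ℝ}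
    (hYX : ∀ j i, Integrable (fun ω ↦ Y ω j * X ω i) μ) (P : Matrix ι κ ℝ) :
    Integrable (fun ω ↦ X ω ⬝ᵥ P *ᵥ Y ω) μ := by
  simp only [dotProduct_mulVec_eq_sum]
  exact integrable_finsetSum _ fun i _ ↦ integrable_finsetSum _ fun j _ ↦ (hYX j i).const_mul _

lemma integral_dotProduct_mulVec {X : Ω → ι → ℝ} {Y : Ω → κ → ℝ}
    (hYX : ∀ j i, Integrable (fun ω ↦ Y ω j * X ω i) μ) {W : Matrix κ ι ℝ}
    (hW : ∀ j i, ∫ ω, Y ω j * X ω i ∂μ = W j i) (P : Matrix ι κ ℝ) :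
    ∫ ω, X ω ⬝ᵥ P *ᵥ Y ω ∂μ = (P * W).trace := by
  have hterm : ∀ i j, Integrable (fun ω ↦ P i j * (Y ω j * X ω i)) μ :=
    fun i j ↦ (hYX j i).const_mul _
  simp only [dotProduct_mulVec_eq_sum, trace, diag_apply, mul_apply]
  rw [integral_finsetSum _ fun i _ ↦ integrable_finsetSum _ fun j _ ↦ hterm i j]
  refine Finset.sum_congr rfl fun i _ ↦ ?_
  rw [integral_finsetSum _ fun j _ ↦ hterm i j]
  simp only [integral_const_mul, hW]

lemma integral_add_dotProduct_mulVec_add [IsProbabilityMeasure μ] {X : Ω → ι → ℝ}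
    (hX : ∀ i, Integrable (fun ω ↦ X ω i) μ) (hmean : ∀ i, ∫ ω, X ω i ∂μ = 0)
    (hXX : ∀ i j, Integrable (fun ω ↦ X ω i * X ω j) μ) {W : Matrix ι ι ℝ}
    (hW : ∀ i j, ∫ ω, X ω i * X ω j ∂μ = W i j) (P : Matrix ι ι ℝ) (z : ι → ℝ) :
    ∫ ω, (z + X ω) ⬝ᵥ P *ᵥ (z + X ω) ∂μ = z ⬝ᵥ P *ᵥ z + (P * W).trace := by
  have hexpand : ∀ w : ι → ℝ, (z + w) ⬝ᵥ P *ᵥ (z + w) =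
      z ⬝ᵥ P *ᵥ z + (P *ᵥ z + z ᵥ* P) ⬝ᵥ w + w ⬝ᵥ P *ᵥ w := by
    intro w
    simp only [mulVec_add, dotProduct_add, add_dotProduct, ← dotProduct_mulVec,
      dotProduct_comm w (P *ᵥ z)]
    ring
  have hlin := integrable_const_dotProduct hX (P *ᵥ z + z ᵥ* P)
  have haff : Integrable (fun ω ↦ z ⬝ᵥ P *ᵥ z + (P *ᵥ z + z ᵥ* P) ⬝ᵥ X ω) μ :=
    (integrable_const _).add hlin
  have hmean' : (fun i ↦ ∫ ω, X ω i ∂μ) = 0 := funext hmean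
  simp only [hexpand]
  rw [integral_add haff (integrable_dotProduct_mulVec hXX P),
    integral_add (integrable_const _) hlin, integral_const_dotProduct hX, hmean',
    integral_dotProduct_mulVec hXX hW, integral_const, probReal_univ, one_smul,
    dotProduct_zero, add_zero]

end Noise

section CompletingTheSquare

variable {ι κ 𝕜 : Type*} [Fintype ι] [Fintype κ] [CommRing 𝕜]

/-- The matrix of the discounted one-step cost `xᵀQx + uᵀRu + γ (Ax + Bu)ᵀP(Ax + Bu)` (the
Q-function of the value `xᵀPx`) as a quadratic form in the state-input pair `(x, u)`, encoded as
`Sum.elim x u`. -/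
def qFunctionMatrix (Q : Matrix ι ι 𝕜) (R : Matrix κ κ 𝕜) (A : Matrix ι ι 𝕜) (B : Matrix ι κ 𝕜)
    (γ : 𝕜) (P : Matrix ι ι 𝕜) : Matrix (ι ⊕ κ) (ι ⊕ κ) 𝕜 :=
  fromBlocks (Q + γ • (Aᵀ * P * A)) (γ • (Aᵀ * P * B))
    (γ • (Bᵀ * P * A)) (R + γ • (Bᵀ * P * B))

lemma dotProduct_transpose_mulVec_eq_mulVec_dotProduct (M : Matrix ι κ 𝕜) (x : κ → 𝕜)
    (y : ι → 𝕜) : x ⬝ᵥ Mᵀ *ᵥ y = (M *ᵥ x) ⬝ᵥ y := by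
  rw [dotProduct_transpose_mulVec, dotProduct_comm]

lemma sumElim_dotProduct_qFunctionMatrix_mulVec (Q : Matrix ι ι 𝕜) (R : Matrix κ κ 𝕜)
    (A : Matrix ι ι 𝕜) (B : Matrix ι κ 𝕜) (γ : 𝕜) (P : Matrix ι ι 𝕜) (x : ι → 𝕜) (u : κ → 𝕜) :
    Sum.elim x u ⬝ᵥ qFunctionMatrix Q R A B γ P *ᵥ Sum.elim x u =
      x ⬝ᵥ Q *ᵥ x + u ⬝ᵥ R *ᵥ u + γ * ((A *ᵥ x + B *ᵥ u) ⬝ᵥ P *ᵥ (A *ᵥ x + B *ᵥ u)) := by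
  simp only [qFunctionMatrix, fromBlocks_mulVec, sumElim_dotProduct_sumElim, Sum.elim_comp_inl,
    Sum.elim_comp_inr, add_mulVec, smul_mulVec, mulVec_add, dotProduct_add, add_dotProduct,
    dotProduct_smul, smul_eq_mul, ← mulVec_mulVec,
    dotProduct_transpose_mulVec_eq_mulVec_dotProduct]
  ring

lemma sumElim_dotProduct_fromBlocks_mulVec [DecidableEq κ] (M : Matrix ι ι 𝕜)
    (N : Matrix ι κ 𝕜) {S : Matrix κ κ 𝕜} (hS : S.IsSymm) (hS' : IsUnit S) (x : ι → 𝕜)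
    (u : κ → 𝕜) :
    Sum.elim x u ⬝ᵥ fromBlocks M N Nᵀ S *ᵥ Sum.elim x u =
      x ⬝ᵥ (M - N * S⁻¹ * Nᵀ) *ᵥ x +
        ((S⁻¹ * Nᵀ) *ᵥ x + u) ⬝ᵥ S *ᵥ ((S⁻¹ * Nᵀ) *ᵥ x + u) := by
  -- With the trivial involution, the library's Hermitian identity is the symmetric one.
  let : StarRing 𝕜 := starRingOfComm
  have : TrivialStar 𝕜 := ⟨fun _ ↦ rfl⟩
  let := hS'.invertible
  have h := schur_complement_eq₂₂ M N x u (isHermitian_iff_isSymm.2 hS)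
  simp only [star_trivial, conjTranspose_eq_transpose_of_trivial, ← dotProduct_mulVec] at h
  rw [h, add_comm]

lemma riccati_complete_square [DecidableEq κ] {Q : Matrix ι ι 𝕜} {R : Matrix κ κ 𝕜}
    {A : Matrix ι ι 𝕜} {B : Matrix ι κ 𝕜} {γ : 𝕜} {P : Matrix ι ι 𝕜} (hP : P.IsSymm)
    (hS : (R + γ • (Bᵀ * P * B)).IsSymm) (hS' : IsUnit (R + γ • (Bᵀ * P * B)))
    (hRic : P = Q + γ • (Aᵀ * P * A) -
      (γ ^ 2) • (Aᵀ * P * B * (R + γ • (Bᵀ * P * B))⁻¹ * (Bᵀ * P * A)))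
    {K : Matrix κ ι 𝕜} (hK : K = -(γ • ((R + γ • (Bᵀ * P * B))⁻¹ * (Bᵀ * P * A))))
    (x : ι → 𝕜) (u : κ → 𝕜) :
    x ⬝ᵥ Q *ᵥ x + u ⬝ᵥ R *ᵥ u + γ * ((A *ᵥ x + B *ᵥ u) ⬝ᵥ P *ᵥ (A *ᵥ x + B *ᵥ u)) =
      x ⬝ᵥ P *ᵥ x + (u - K *ᵥ x) ⬝ᵥ (R + γ • (Bᵀ * P * B)) *ᵥ (u - K *ᵥ x) := by
  have hcross : γ • (Bᵀ * P * A) = (γ • (Aᵀ * P * B))ᵀ := by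
    simp only [transpose_smul, transpose_mul, transpose_transpose, hP.eq, Matrix.mul_assoc]
  have hschur : Q + γ • (Aᵀ * P * A) -
      γ • (Aᵀ * P * B) * (R + γ • (Bᵀ * P * B))⁻¹ * (γ • (Aᵀ * P * B))ᵀ = P := by
    rw [← hcross, Matrix.smul_mul, Matrix.smul_mul, Matrix.mul_smul, smul_smul, ← sq, ← hRic]
  have hdev : ((R + γ • (Bᵀ * P * B))⁻¹ * (γ • (Aᵀ * P * B))ᵀ) *ᵥ x + u = u - K *ᵥ x := by
    rw [← hcross, Matrix.mul_smul, hK, neg_mulVec, sub_neg_eq_add, add_comm]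
  rw [← sumElim_dotProduct_qFunctionMatrix_mulVec, qFunctionMatrix, hcross,
    sumElim_dotProduct_fromBlocks_mulVec _ _ hS hS', hschur, hdev]

end CompletingTheSquare

section Bellman

variable {ι κ : Type*} [Fintype ι]

lemma posDef_add_smul_transpose_mul_mul [Finite κ] {R : Matrix κ κ ℝ} (hR : R.PosDef)
    (B : Matrix ι κ ℝ) {γ : ℝ} (hγ : 0 ≤ γ) {P : Matrix ι ι ℝ} (hP : P.PosSemidef) :
    (R + γ • (Bᵀ * P * B)).PosDef := by
  have h : (Bᵀ * P * B).PosSemidef := by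
    simpa only [conjTranspose_eq_transpose_of_trivial] using hP.conjTranspose_mul_mul_same B
  exact hR.add_posSemidef (h.smul hγ)

theorem stmt19_general {Ω : Type*} [MeasurableSpace Ω] [Fintype κ] [DecidableEq κ]
    {Q : Matrix ι ι ℝ} {R : Matrix κ κ ℝ} {A : Matrix ι ι ℝ} {B : Matrix ι κ ℝ} {γ : ℝ} (hγ : γ ≠ 1)
    {P : Matrix ι ι ℝ} (hP : P.IsSymm) (hS : (R + γ • (Bᵀ * P * B)).PosDef)
    (hRic : P = Q + γ • (Aᵀ * P * A) -
      (γ ^ 2) • (Aᵀ * P * B * (R + γ • (Bᵀ * P * B))⁻¹ * (Bᵀ * P * A)))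
    {W : Matrix ι ι ℝ} {μ : Measure Ω} [IsProbabilityMeasure μ] {X : Ω → ι → ℝ}
    (hX : ∀ i, Integrable (fun ω ↦ X ω i) μ) (hmean : ∀ i, ∫ ω, X ω i ∂μ = 0)
    (hXX : ∀ i j, Integrable (fun ω ↦ X ω i * X ω j) μ)
    (hW : ∀ i j, ∫ ω, X ω i * X ω j ∂μ = W i j)
    {K : Matrix κ ι ℝ} (hK : K = -(γ • ((R + γ • (Bᵀ * P * B))⁻¹ * (Bᵀ * P * A))))
    {c : ℝ} (hc : c = γ / (1 - γ) * (P * W).trace) :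
    (∀ (x : ι → ℝ) (u : κ → ℝ),
      x ⬝ᵥ P *ᵥ x + c ≤ x ⬝ᵥ Q *ᵥ x + u ⬝ᵥ R *ᵥ u +
        γ * ((∫ ω, (A *ᵥ x + B *ᵥ u + X ω) ⬝ᵥ P *ᵥ (A *ᵥ x + B *ᵥ u + X ω) ∂μ) + c)) ∧
    (∀ x : ι → ℝ,
      x ⬝ᵥ P *ᵥ x + c = x ⬝ᵥ Q *ᵥ x + (K *ᵥ x) ⬝ᵥ R *ᵥ (K *ᵥ x) +
        γ * ((∫ ω, (A *ᵥ x + B *ᵥ (K *ᵥ x) + X ω) ⬝ᵥ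
          P *ᵥ (A *ᵥ x + B *ᵥ (K *ᵥ x) + X ω) ∂μ) + c)) := by
  have hcfix : γ * ((P * W).trace + c) = c := by
    have hγ' : 1 - γ ≠ 0 := sub_ne_zero.2 hγ.symm
    rw [hc]
    field_simp
    ring
  have hcost : ∀ (x : ι → ℝ) (u : κ → ℝ), x ⬝ᵥ Q *ᵥ x + u ⬝ᵥ R *ᵥ u +
      γ * ((∫ ω, (A *ᵥ x + B *ᵥ u + X ω) ⬝ᵥ P *ᵥ (A *ᵥ x + B *ᵥ u + X ω) ∂μ) + c) =
        x ⬝ᵥ P *ᵥ x + c + (u - K *ᵥ x) ⬝ᵥ (R + γ • (Bᵀ * P * B)) *ᵥ (u - K *ᵥ x) := by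
    intro x u
    rw [integral_add_dotProduct_mulVec_add hX hmean hXX hW]
    linear_combination hcfix + riccati_complete_square hP
      (isHermitian_iff_isSymm.1 hS.isHermitian) hS.isUnit hRic hK x u
  refine ⟨fun x u ↦ ?_, fun x ↦ ?_⟩
  · have hnonneg := hS.posSemidef.dotProduct_mulVec_nonneg (u - K *ᵥ x)
    rw [star_trivial] at hnonneg
    rw [hcost]
    exact le_add_of_nonneg_right hnonneg
  · rw [hcost, sub_self, zero_dotProduct, add_zero]

end Bellman

/-- Let `Q` (`n × n`) and `R` (`m × m`) be symmetric positive
definite real matrices, `A` a real `n × n` matrix, `B` a real `n × m` matrix,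
`γ ∈ (0,1)`, and `P*` a symmetric positive semidefinite real `n × n` matrix
satisfying the discounted algebraic Riccati equation
`P* = Q + γ AᵀP*A - γ² AᵀP*B (R + γBᵀP*B)⁻¹ BᵀP*A`.  Let `μ` be a probability
measure on `ℝⁿ` with zero mean and second-moment matrix `W`, set
`K* = -γ (R + γBᵀP*B)⁻¹ BᵀP*A` and `c* = (γ/(1-γ)) Tr(P*W)`.  Then for every
`x ∈ ℝⁿ` and every `u ∈ ℝᵐ`:
`xᵀP*x + c* ≤ xᵀQx + uᵀRu + γ (∫ (Ax + Bu + w)ᵀP*(Ax + Bu + w) dμ(w) + c*)`,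
with equality when `u = K* x`. -/
theorem stmt19 {n m : ℕ} (Q : Matrix (Fin n) (Fin n) ℝ) (hQ : Q.PosDef)
    (R : Matrix (Fin m) (Fin m) ℝ) (hR : R.PosDef)
    (A : Matrix (Fin n) (Fin n) ℝ) (B : Matrix (Fin n) (Fin m) ℝ)
    (γ : ℝ) (hγ : γ ∈ Set.Ioo (0 : ℝ) 1)
    (Pstar : Matrix (Fin n) (Fin n) ℝ) (hPs : Pstar.PosSemidef)
    (hRic : Pstar = Q + γ • (Aᵀ * Pstar * A) -
      (γ ^ 2) • (Aᵀ * Pstar * B * (R + γ • (Bᵀ * Pstar * B))⁻¹ * (Bᵀ * Pstar * A)))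
    (W : Matrix (Fin n) (Fin n) ℝ)
    (μ : Measure (Fin n → ℝ)) [IsProbabilityMeasure μ]
    (hint1 : ∀ i, Integrable (fun w : Fin n → ℝ => w i) μ)
    (hmean : ∀ i, ∫ w : Fin n → ℝ, w i ∂μ = 0)
    (hint2 : ∀ i j, Integrable (fun w : Fin n → ℝ => w i * w j) μ)
    (hW : ∀ i j, ∫ w : Fin n → ℝ, w i * w j ∂μ = W i j)
    (Kstar : Matrix (Fin m) (Fin n) ℝ)
    (hK : Kstar = -(γ • ((R + γ • (Bᵀ * Pstar * B))⁻¹ * (Bᵀ * Pstar * A))))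
    (cstar : ℝ) (hc : cstar = γ / (1 - γ) * (Pstar * W).trace) :
    (∀ (x : Fin n → ℝ) (u : Fin m → ℝ),
      x ⬝ᵥ (Pstar *ᵥ x) + cstar ≤
        x ⬝ᵥ (Q *ᵥ x) + u ⬝ᵥ (R *ᵥ u) +
          γ * ((∫ w : Fin n → ℝ,
            (A *ᵥ x + B *ᵥ u + w) ⬝ᵥ (Pstar *ᵥ (A *ᵥ x + B *ᵥ u + w)) ∂μ) + cstar)) ∧
    (∀ x : Fin n → ℝ,
      x ⬝ᵥ (Pstar *ᵥ x) + cstar =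
        x ⬝ᵥ (Q *ᵥ x) + (Kstar *ᵥ x) ⬝ᵥ (R *ᵥ (Kstar *ᵥ x)) +
          γ * ((∫ w : Fin n → ℝ,
            (A *ᵥ x + B *ᵥ (Kstar *ᵥ x) + w) ⬝ᵥ
              (Pstar *ᵥ (A *ᵥ x + B *ᵥ (Kstar *ᵥ x) + w)) ∂μ) + cstar)) :=
  stmt19_general hγ.2.ne (isHermitian_iff_isSymm.1 hPs.isHermitian)
    (posDef_add_smul_transpose_mul_mul hR B hγ.1.le hPs) hRic hint1 hmean hint2 hW hK hc
end
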